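/- arXiv:1803.11073 — 3 statements merged into one kernel-verified Lean document; each statement's English description precedes it below -/
import Mathlib

section
/- (Furstenberg intersection lemma.) Let X be an infinite separable locally compact metric space and let f : X → X be a continuous weakly mixing map. Then for every n ≥ 1 and all nonempty open sets U₁, …, Uₙ, V₁, …, Vₙ ⊆ X there exist nonempty open sets Û, V̂ ⊆ X such that N(Û, V̂) is nonempty and N(Û, V̂) ⊆ N(U₁, V₁) ∩ N(U₂, V₂) ∩ … ∩ N(Uₙ, Vₙ). -/
/-- `NSet f U V` is the set `N(U,V) = {n ≥ 1 : fⁿ(U) ∩ V ≠ ∅}`. -/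
def NSet {X : Type*} (f : X → X) (U V : Set X) : Set ℕ :=
  {n : ℕ | 1 ≤ n ∧ (f^[n] '' U ∩ V).Nonempty}

/-- `f` is (topologically) weakly mixing. -/
def WeaklyMixing {X : Type*} [TopologicalSpace X] (f : X → X) : Prop :=
  ∀ U₁ U₂ V₁ V₂ : Set X, IsOpen U₁ → IsOpen U₂ → IsOpen V₁ → IsOpen V₂ →
    U₁.Nonempty → U₂.Nonempty → V₁.Nonempty → V₂.Nonempty →
    ∃ n : ℕ, 1 ≤ n ∧ (f^[n] '' U₁ ∩ V₁).Nonempty ∧ (f^[n] '' U₂ ∩ V₂).Nonempty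

/-!
Weak mixing, applied to the pairs `(A, U)` and `(B, V)`, gives an `m` for which both
`A ∩ f⁻ᵐ(U)` and `B ∩ f⁻ᵐ(V)` are nonempty. If `fʲ` sends a point `x` of the first set into the
second, then it sends `fᵐ(x) ∈ U` into `V`, because `fᵐ` and `fʲ` commute.
Hence `N(A ∩ f⁻ᵐ(U), B ∩ f⁻ᵐ(V)) ⊆ N(A, B) ∩ N(U, V)`: the return-time sets are directed downwards,
so finitely many of them always contain a common one.
-/

open Set

section NSet

variable {X Y : Type*} {f : X → X} {U V : Set X}

theorem mem_NSet_iff {n : ℕ} : n ∈ NSet f U V ↔ 1 ≤ n ∧ (U ∩ f^[n] ⁻¹' V).Nonempty := by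
  rw [NSet, mem_ofPred_eq, image_inter_nonempty_iff]

theorem NSet_mono {U' V' : Set X} (hU : U ⊆ U') (hV : V ⊆ V') : NSet f U V ⊆ NSet f U' V' :=
  fun _ ⟨hn, h⟩ => ⟨hn, h.mono (inter_subset_inter (image_mono hU) hV)⟩

theorem NSet_preimage_subset {g : Y → Y} {φ : X → Y} (hφ : Function.Semiconj φ f g)
    (U V : Set Y) : NSet f (φ ⁻¹' U) (φ ⁻¹' V) ⊆ NSet g U V := by
  intro n hn
  obtain ⟨one_le, x, hxU, hxV⟩ := mem_NSet_iff.1 hn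
  refine mem_NSet_iff.2 ⟨one_le, φ x, hxU, ?_⟩
  rw [mem_preimage, ← (hφ.iterate_right n).eq x]
  exact hxV

end NSet

/-- The nonempty open subsets of `X`, as a type, so that the sets `N(U, V)` can be treated as a
family indexed by pairs of them. -/
abbrev NonemptyOpen (X : Type*) [TopologicalSpace X] : Type _ :=
  {U : Set X // IsOpen U ∧ U.Nonempty}

namespace WeaklyMixing

variable {X : Type*} [TopologicalSpace X] {f : X → X}

theorem nonempty_NSet_inter_NSet (hwm : WeaklyMixing f) (U₁ V₁ U₂ V₂ : NonemptyOpen X) :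
    (NSet f U₁ V₁ ∩ NSet f U₂ V₂).Nonempty := by
  obtain ⟨n, hn, h₁, h₂⟩ := hwm U₁ U₂ V₁ V₂ U₁.2.1 U₂.2.1 V₁.2.1 V₂.2.1
    U₁.2.2 U₂.2.2 V₁.2.2 V₂.2.2
  exact ⟨n, ⟨hn, h₁⟩, hn, h₂⟩

theorem directed_NSet (hwm : WeaklyMixing f) (hf : Continuous f) :
    Directed (· ⊇ ·) fun p : NonemptyOpen X × NonemptyOpen X => NSet f p.1 p.2 := by
  rintro ⟨A, B⟩ ⟨U, V⟩
  obtain ⟨m, hAU, hBV⟩ := hwm.nonempty_NSet_inter_NSet A U B V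
  have isOpen_inter_preimage (S T : NonemptyOpen X) : IsOpen (S ∩ f^[m] ⁻¹' T : Set X) :=
    S.2.1.inter (T.2.1.preimage (hf.iterate m))
  refine ⟨(⟨A ∩ f^[m] ⁻¹' U, isOpen_inter_preimage A U, (mem_NSet_iff.1 hAU).2⟩,
    ⟨B ∩ f^[m] ⁻¹' V, isOpen_inter_preimage B V, (mem_NSet_iff.1 hBV).2⟩), ?_, ?_⟩
  · exact NSet_mono inter_subset_left inter_subset_left
  · exact (NSet_mono inter_subset_right inter_subset_right).trans
      (NSet_preimage_subset (Function.Commute.iterate_self f m) U V)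

end WeaklyMixing

theorem furstenberg_intersection_general {X ι : Type*} [TopologicalSpace X] [Nonempty X]
    [Finite ι] {f : X → X} (hf : Continuous f) (hwm : WeaklyMixing f) (U V : ι → Set X)
    (hU : ∀ i, IsOpen (U i)) (hV : ∀ i, IsOpen (V i))
    (hU' : ∀ i, (U i).Nonempty) (hV' : ∀ i, (V i).Nonempty) :
    ∃ Uhat Vhat : Set X, IsOpen Uhat ∧ IsOpen Vhat ∧ Uhat.Nonempty ∧ Vhat.Nonempty ∧
      (NSet f Uhat Vhat).Nonempty ∧ NSet f Uhat Vhat ⊆ ⋂ i, NSet f (U i) (V i) := by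
  have : Nonempty (NonemptyOpen X) := ⟨⟨univ, isOpen_univ, univ_nonempty⟩⟩
  obtain ⟨⟨A, B⟩, hAB⟩ := (hwm.directed_NSet hf).finite_le
    fun i => (⟨U i, hU i, hU' i⟩, ⟨V i, hV i, hV' i⟩)
  exact ⟨A, B, A.2.1, B.2.1, A.2.2, B.2.2, (hwm.nonempty_NSet_inter_NSet A B A B).left,
    subset_iInter hAB⟩

/-- Furstenberg intersection lemma. -/
theorem furstenberg_intersection {X : Type*} [MetricSpace X] [Infinite X]
    [TopologicalSpace.SeparableSpace X] [LocallyCompactSpace X]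
    (f : X → X) (hf : Continuous f) (hwm : WeaklyMixing f) :
    ∀ n : ℕ, 1 ≤ n → ∀ U V : Fin n → Set X,
      (∀ i, IsOpen (U i)) → (∀ i, IsOpen (V i)) →
      (∀ i, (U i).Nonempty) → (∀ i, (V i).Nonempty) →
      ∃ Uhat Vhat : Set X, IsOpen Uhat ∧ IsOpen Vhat ∧ Uhat.Nonempty ∧ Vhat.Nonempty ∧
        (NSet f Uhat Vhat).Nonempty ∧ NSet f Uhat Vhat ⊆ ⋂ i, NSet f (U i) (V i) :=
  fun _ _ U V => furstenberg_intersection_general hf hwm U V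
end

section
/- Let X be an infinite separable locally compact metric space and let f : X → X be a continuous weakly mixing map. Then for every n ≥ 1 the n-fold product map f × f × … × f : Xⁿ → Xⁿ, (x₁, …, xₙ) ↦ (f(x₁), …, f(xₙ)), is topologically transitive: for any nonempty open sets W₁, W₂ ⊆ Xⁿ there exists k ≥ 1 with (f × … × f)ᵏ(W₁) ∩ W₂ ≠ ∅. -/
/-- The `n`-fold product map `f × f × ⋯ × f` on `Xⁿ`. -/
def prodMap {X : Type*} (n : ℕ) (f : X → X) : (Fin n → X) → (Fin n → X) :=
  fun x i => f (x i)

/-!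
Writing `N(U, V) = {k | fᵏ(U) ∩ V ≠ ∅}`, Furstenberg's observation is that if `fᵐ(U₁)` meets `U₂`
and `fᵐ(V₁)` meets `V₂`, then
`N(U₁ ∩ f⁻ᵐ(U₂), V₁ ∩ f⁻ᵐ(V₂)) ⊆ N(U₁, V₁) ∩ N(U₂, V₂)`.
Weak mixing provides such an `m` for any nonempty open sets, so the sets `N(U, V)` form a filter
base and finitely many of them have a common positive element. This is enough because every nonempty
open set in a product contains a nonempty box constraining only finitely many coordinates.
-/

open Set

/-- The times at which some point of `U` is carried into `V` by an iterate of `f`, usually written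
`N(U, V)`. Time `0` is included; positivity of a time is required separately. -/
def hittingTimes {X : Type*} (f : X → X) (U V : Set X) : Set ℕ :=
  {k | (f^[k] '' U ∩ V).Nonempty}

/-- Topological transitivity of a single map: some iterate of positive order carries a point of any
given nonempty open set into any other. -/
def TopologicallyTransitive {X : Type*} [TopologicalSpace X] (f : X → X) : Prop :=
  ∀ U V : Set X, IsOpen U → IsOpen V → U.Nonempty → V.Nonempty →
    ∃ k : ℕ, 1 ≤ k ∧ k ∈ hittingTimes f U V

section HittingTimes

variable {X : Type*} {f : X → X}

theorem mem_hittingTimes_iff {U V : Set X} {k : ℕ} :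
    k ∈ hittingTimes f U V ↔ (U ∩ f^[k] ⁻¹' V).Nonempty :=
  image_inter_nonempty_iff

theorem hittingTimes_mono {U U' V V' : Set X} (hU : U ⊆ U') (hV : V ⊆ V') :
    hittingTimes f U V ⊆ hittingTimes f U' V' :=
  fun _ hk => hk.mono (inter_subset_inter (image_mono hU) hV)

theorem hittingTimes_inter_preimage_subset (U₁ U₂ V₁ V₂ : Set X) (m : ℕ) :
    hittingTimes f (U₁ ∩ f^[m] ⁻¹' U₂) (V₁ ∩ f^[m] ⁻¹' V₂) ⊆
      hittingTimes f U₁ V₁ ∩ hittingTimes f U₂ V₂ := by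
  rintro k ⟨_, ⟨x, ⟨hxU₁, hxU₂⟩, rfl⟩, hxV₁, hxV₂⟩
  have hcomm : f^[k] (f^[m] x) = f^[m] (f^[k] x) := (Function.Commute.refl f).iterate_iterate k m x
  exact ⟨⟨f^[k] x, mem_image_of_mem _ hxU₁, hxV₁⟩,
    ⟨f^[k] (f^[m] x), mem_image_of_mem _ hxU₂, hcomm ▸ hxV₂⟩⟩

end HittingTimes

theorem mem_hittingTimes_piMap {ι : Type*} {X : ι → Type*} [Nonempty (∀ i, X i)]
    {f : ∀ i, X i → X i} {s : Set ι} {U V : ∀ i, Set (X i)} {k : ℕ}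
    (h : ∀ i ∈ s, k ∈ hittingTimes (f i) (U i) (V i)) :
    k ∈ hittingTimes (Pi.map f) (s.pi U) (s.pi V) := by
  have : ∀ i, Nonempty (X i) := Classical.nonempty_pi.1 inferInstance
  choose! x hxU hxV using fun i hi => mem_hittingTimes_iff.1 (h i hi)
  rw [mem_hittingTimes_iff, Pi.map_iterate]
  exact ⟨x, hxU, hxV⟩

theorem exists_finite_pi_subset_of_isOpen {ι : Type*} {X : ι → Type*}
    [∀ i, TopologicalSpace (X i)] {W : Set (∀ i, X i)} (hW : IsOpen W) (hne : W.Nonempty) :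
    ∃ (I : Set ι) (U : ∀ i, Set (X i)), I.Finite ∧ (∀ i, IsOpen (U i)) ∧
      (∀ i, (U i).Nonempty) ∧ I.pi U ⊆ W := by
  obtain ⟨a, ha⟩ := hne
  have hWa : W ∈ Filter.pi fun i => nhds (a i) := nhds_pi (a := a) ▸ hW.mem_nhds ha
  obtain ⟨I, hI, t, ht, htW⟩ := Filter.mem_pi.1 hWa
  exact ⟨I, fun i => interior (t i), hI, fun _ => isOpen_interior,
    fun i => ⟨a i, mem_interior_iff_mem_nhds.2 (ht i)⟩,
    (pi_mono fun _ _ => interior_subset).trans htW⟩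

namespace WeaklyMixing

variable {X : Type*} [TopologicalSpace X] {f : X → X}

theorem topologicallyTransitive (hwm : WeaklyMixing f) : TopologicallyTransitive f := by
  intro U V hU hV hUne hVne
  obtain ⟨k, hk, hkUV, -⟩ := hwm U U V V hU hU hV hV hUne hUne hVne hVne
  exact ⟨k, hk, hkUV⟩

theorem exists_hittingTimes_subset_inter (hwm : WeaklyMixing f) (hf : Continuous f)
    {U₁ U₂ V₁ V₂ : Set X} (hU₁ : IsOpen U₁) (hU₂ : IsOpen U₂) (hV₁ : IsOpen V₁) (hV₂ : IsOpen V₂)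
    (hU₁ne : U₁.Nonempty) (hU₂ne : U₂.Nonempty) (hV₁ne : V₁.Nonempty) (hV₂ne : V₂.Nonempty) :
    ∃ U V : Set X, IsOpen U ∧ IsOpen V ∧ U.Nonempty ∧ V.Nonempty ∧
      hittingTimes f U V ⊆ hittingTimes f U₁ V₁ ∩ hittingTimes f U₂ V₂ := by
  obtain ⟨m, -, hmU, hmV⟩ :=
    hwm U₁ V₁ U₂ V₂ hU₁ hV₁ hU₂ hV₂ hU₁ne hV₁ne hU₂ne hV₂ne
  have hfm : Continuous f^[m] := hf.iterate m
  exact ⟨U₁ ∩ f^[m] ⁻¹' U₂, V₁ ∩ f^[m] ⁻¹' V₂, hU₁.inter (hU₂.preimage hfm),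
    hV₁.inter (hV₂.preimage hfm), image_inter_nonempty_iff.1 hmU, image_inter_nonempty_iff.1 hmV,
    hittingTimes_inter_preimage_subset U₁ U₂ V₁ V₂ m⟩

variable {ι : Type*} {U V : ι → Set X}

theorem exists_hittingTimes_subset_biInter [Nonempty X] (hwm : WeaklyMixing f) (hf : Continuous f)
    {s : Set ι} (hs : s.Finite) (hU : ∀ i, IsOpen (U i)) (hV : ∀ i, IsOpen (V i))
    (hUne : ∀ i, (U i).Nonempty) (hVne : ∀ i, (V i).Nonempty) :
    ∃ A B : Set X, IsOpen A ∧ IsOpen B ∧ A.Nonempty ∧ B.Nonempty ∧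
      hittingTimes f A B ⊆ ⋂ i ∈ s, hittingTimes f (U i) (V i) := by
  induction s, hs using Set.Finite.induction_on with
  | empty =>
    exact ⟨univ, univ, isOpen_univ, isOpen_univ, univ_nonempty, univ_nonempty,
      subset_iInter₂ fun _ hi => hi.elim⟩
  | @insert i s _ _ ih =>
    obtain ⟨A, B, hA, hB, hAne, hBne, hAB⟩ := ih
    obtain ⟨A', B', hA', hB', hAne', hBne', hAB'⟩ := hwm.exists_hittingTimes_subset_inter hf
      (hU i) hA (hV i) hB (hUne i) hAne (hVne i) hBne
    refine ⟨A', B', hA', hB', hAne', hBne', ?_⟩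
    rw [biInter_insert]
    exact hAB'.trans (inter_subset_inter_right _ hAB)

theorem exists_forall_mem_hittingTimes (hwm : WeaklyMixing f) (hf : Continuous f)
    {s : Set ι} (hs : s.Finite) (hU : ∀ i, IsOpen (U i)) (hV : ∀ i, IsOpen (V i))
    (hUne : ∀ i, (U i).Nonempty) (hVne : ∀ i, (V i).Nonempty) :
    ∃ k : ℕ, 1 ≤ k ∧ ∀ i ∈ s, k ∈ hittingTimes f (U i) (V i) := by
  rcases s.eq_empty_or_nonempty with rfl | ⟨i, -⟩
  · exact ⟨1, le_rfl, fun _ hi => hi.elim⟩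
  have : Nonempty X := (hUne i).to_type
  obtain ⟨A, B, hA, hB, hAne, hBne, hAB⟩ :=
    hwm.exists_hittingTimes_subset_biInter hf hs hU hV hUne hVne
  obtain ⟨k, hk, hkAB⟩ := hwm.topologicallyTransitive A B hA hB hAne hBne
  exact ⟨k, hk, mem_iInter₂.1 (hAB hkAB)⟩

end WeaklyMixing

theorem prod_transitive_of_weaklyMixing_general {ι X : Type*} [TopologicalSpace X] {f : X → X}
    (hf : Continuous f) (hwm : WeaklyMixing f) :
    TopologicallyTransitive (Pi.map fun _ : ι => f) := by
  intro W₁ W₂ hW₁ hW₂ hW₁ne hW₂ne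
  have : Nonempty (ι → X) := hW₁ne.to_type
  obtain ⟨I, U, hI, hU, hUne, hUW⟩ := exists_finite_pi_subset_of_isOpen hW₁ hW₁ne
  obtain ⟨J, V, hJ, hV, hVne, hVW⟩ := exists_finite_pi_subset_of_isOpen hW₂ hW₂ne
  obtain ⟨k, hk, hkUV⟩ :=
    hwm.exists_forall_mem_hittingTimes hf (hI.union hJ) hU hV hUne hVne
  have hUW' : (I ∪ J).pi U ⊆ W₁ := (pi_mono' (fun _ _ => Subset.rfl) subset_union_left).trans hUW
  have hVW' : (I ∪ J).pi V ⊆ W₂ := (pi_mono' (fun _ _ => Subset.rfl) subset_union_right).trans hVW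
  exact ⟨k, hk, hittingTimes_mono hUW' hVW' (mem_hittingTimes_piMap hkUV)⟩

theorem prod_transitive_of_weaklyMixing {X : Type*} [MetricSpace X] [Infinite X]
    [TopologicalSpace.SeparableSpace X] [LocallyCompactSpace X]
    (f : X → X) (hf : Continuous f) (hwm : WeaklyMixing f) :
    ∀ n : ℕ, 1 ≤ n → ∀ W₁ W₂ : Set (Fin n → X), IsOpen W₁ → IsOpen W₂ →
      W₁.Nonempty → W₂.Nonempty →
      ∃ k : ℕ, 1 ≤ k ∧ ((prodMap n f)^[k] '' W₁ ∩ W₂).Nonempty :=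
  fun _ _ => prod_transitive_of_weaklyMixing_general hf hwm
end

section
/- Let X be an infinite separable locally compact metric space and let f : X → X be a continuous map. Then f is weakly mixing if and only if for all nonempty open sets U, V ⊆ X the set N(U, V) contains two consecutive positive integers, i.e., there exists n ≥ 1 with n ∈ N(U, V) and n+1 ∈ N(U, V). -/
section NSet

variable {X : Type*} {f : X → X} {U U' V V' : Set X} {a c d k n : ℕ}

theorem mem_nSet : n ∈ NSet f U V ↔ 1 ≤ n ∧ ∃ x ∈ U, f^[n] x ∈ V := by
  rw [NSet, Set.mem_ofPred_eq, Set.image_inter_nonempty_iff]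
  rfl

theorem nSet_mono (hU : U ⊆ U') (hV : V ⊆ V') : NSet f U V ⊆ NSet f U' V' :=
  fun _ hn ↦ ⟨hn.1, hn.2.mono (Set.inter_subset_inter (Set.image_mono hU) hV)⟩

theorem inter_preimage_nonempty_of_mem_nSet (hn : n ∈ NSet f U V) :
    (U ∩ f^[n] ⁻¹' V).Nonempty :=
  (mem_nSet.1 hn).2

theorem mem_nSet_of_mem_nSet_preimage (hn : n ∈ NSet f (f^[c] ⁻¹' U) (f^[d] ⁻¹' V))
    (hk : 1 ≤ k) (hkn : k + c = d + n) : k ∈ NSet f U V := by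
  obtain ⟨-, x, hxU, hxV⟩ := mem_nSet.1 hn
  refine mem_nSet.2 ⟨hk, f^[c] x, hxU, ?_⟩
  rwa [← Function.iterate_add_apply, hkn, Function.iterate_add_apply]

theorem add_mem_nSet_of_mem_nSet_preimage (hn : n ∈ NSet f U (f^[d] ⁻¹' V)) :
    n + d ∈ NSet f U V :=
  mem_nSet_of_mem_nSet_preimage (c := 0) hn (le_add_right hn.1) (add_comm n d)

theorem mem_and_succ_mem_nSet_of_mem_nSet_inter_preimage
    (hn : n ∈ NSet f (U ∩ f^[a] ⁻¹' U) (V ∩ f^[a + 1] ⁻¹' V)) :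
    n ∈ NSet f U V ∧ n + 1 ∈ NSet f U V := by
  have hn' : n ∈ NSet f (f^[a] ⁻¹' U) (f^[a + 1] ⁻¹' V) :=
    nSet_mono Set.inter_subset_right Set.inter_subset_right hn
  exact ⟨nSet_mono Set.inter_subset_left Set.inter_subset_left hn,
    mem_nSet_of_mem_nSet_preimage hn' (by lia) (by lia)⟩

end NSet

/-- A set of natural numbers is thick if it contains arbitrarily long blocks of consecutive
integers; a block of length `m + 1` is encoded as `n, n + 1, …, n + m`. Thickness of all the sets
`N(U, V)` is the link between two consecutive return times and weak mixing. -/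
def IsThick (S : Set ℕ) : Prop :=
  ∀ m, ∃ n, ∀ i ≤ m, n + i ∈ S

theorem IsThick.nonempty {S : Set ℕ} (hS : IsThick S) : S.Nonempty :=
  let ⟨n, hn⟩ := hS 0
  ⟨n, hn 0 le_rfl⟩

section TopologicalSpace

variable {X : Type*} [TopologicalSpace X] {f : X → X} {U V : Set X}

theorem isOpen_inter_preimage_iterate (hf : Continuous f) (hU : IsOpen U) (hV : IsOpen V) (n : ℕ) :
    IsOpen (U ∩ f^[n] ⁻¹' V) :=
  hU.inter (hV.preimage (hf.iterate n))

theorem isThick_nSet_of_two_consecutive (hf : Continuous f)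
    (h : ∀ U V : Set X, IsOpen U → IsOpen V → U.Nonempty → V.Nonempty →
      ∃ n, n ∈ NSet f U V ∧ n + 1 ∈ NSet f U V)
    (hU : IsOpen U) (hV : IsOpen V) (hU₀ : U.Nonempty) (hV₀ : V.Nonempty) :
    IsThick (NSet f U V) := by
  intro m
  induction m generalizing U V with
  | zero =>
    obtain ⟨n, hn, -⟩ := h U V hU hV hU₀ hV₀
    exact ⟨n, fun i hi ↦ by rwa [Nat.le_zero.1 hi]⟩
  | succ m ih =>
    have block_self (W : Set X) (hW : IsOpen W) (hW₀ : W.Nonempty) :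
        ∃ n, ∀ i ≤ m + 1, n + i ∈ NSet f W W := by
      obtain ⟨a, ha, ha'⟩ := h W W hW hW hW₀ hW₀
      obtain ⟨k, hk⟩ := ih (isOpen_inter_preimage_iterate hf hW hW a)
        (isOpen_inter_preimage_iterate hf hW hW (a + 1))
        (inter_preimage_nonempty_of_mem_nSet ha) (inter_preimage_nonempty_of_mem_nSet ha')
      refine ⟨k, fun i hi ↦ ?_⟩
      rcases Nat.le_or_eq_of_le_succ hi with him | rfl
      · exact (mem_and_succ_mem_nSet_of_mem_nSet_inter_preimage (hk i him)).1
      · exact (mem_and_succ_mem_nSet_of_mem_nSet_inter_preimage (hk m le_rfl)).2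
    obtain ⟨c, hc, -⟩ := h U V hU hV hU₀ hV₀
    obtain ⟨n, hn⟩ := block_self (U ∩ f^[c] ⁻¹' V) (isOpen_inter_preimage_iterate hf hU hV c)
      (inter_preimage_nonempty_of_mem_nSet hc)
    refine ⟨n + c, fun i hi ↦ ?_⟩
    rw [add_right_comm]
    exact add_mem_nSet_of_mem_nSet_preimage
      (nSet_mono Set.inter_subset_left Set.inter_subset_right (hn i hi))

theorem weaklyMixing_of_isThick_nSet (hf : Continuous f)
    (h : ∀ U V : Set X, IsOpen U → IsOpen V → U.Nonempty → V.Nonempty → IsThick (NSet f U V)) :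
    WeaklyMixing f := by
  intro U₁ U₂ V₁ V₂ hU₁ hU₂ hV₁ hV₂ hU₁₀ hU₂₀ hV₁₀ hV₂₀
  obtain ⟨c, hc⟩ := (h U₁ U₂ hU₁ hU₂ hU₁₀ hU₂₀).nonempty
  obtain ⟨d, hd⟩ := (h V₁ V₂ hV₁ hV₂ hV₁₀ hV₂₀).nonempty
  obtain ⟨k, hk⟩ := h (U₁ ∩ f^[c] ⁻¹' U₂) (V₁ ∩ f^[d] ⁻¹' V₂)
    (isOpen_inter_preimage_iterate hf hU₁ hU₂ c) (isOpen_inter_preimage_iterate hf hV₁ hV₂ d)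
    (inter_preimage_nonempty_of_mem_nSet hc) (inter_preimage_nonempty_of_mem_nSet hd) (c + d)
  have h₁ : k + d ∈ NSet f U₁ V₁ :=
    nSet_mono Set.inter_subset_left Set.inter_subset_left (hk d (by lia))
  have hkc : k + c ∈ NSet f (f^[c] ⁻¹' U₂) (f^[d] ⁻¹' V₂) :=
    nSet_mono Set.inter_subset_right Set.inter_subset_right (hk c (by lia))
  have h₂ : k + d ∈ NSet f U₂ V₂ := mem_nSet_of_mem_nSet_preimage hkc h₁.1 (by lia)
  exact ⟨k + d, h₁.1, h₁.2, h₂.2⟩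

theorem WeaklyMixing.denseRange (h : WeaklyMixing f) : DenseRange f := by
  refine dense_iff_inter_open.2 fun V hV hV₀ ↦ ?_
  obtain ⟨n, hn, ⟨_, ⟨x, -, rfl⟩, hxV⟩, -⟩ := h V V V V hV hV hV hV hV₀ hV₀ hV₀ hV₀
  obtain ⟨k, rfl⟩ := Nat.exists_eq_add_of_le' hn
  rw [Function.iterate_succ_apply'] at hxV
  exact ⟨_, hxV, Set.mem_range_self _⟩

theorem WeaklyMixing.exists_mem_nSet_and_succ_mem_nSet (h : WeaklyMixing f) (hf : Continuous f)
    (hU : IsOpen U) (hV : IsOpen V) (hU₀ : U.Nonempty) (hV₀ : V.Nonempty) :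
    ∃ n, n ∈ NSet f U V ∧ n + 1 ∈ NSet f U V := by
  have hfV₀ : (f ⁻¹' V).Nonempty := h.denseRange.exists_mem_open hV hV₀
  obtain ⟨n, hn, hnV, hnfV⟩ := h U U V (f ⁻¹' V) hU hU hV (hV.preimage hf) hU₀ hU₀ hV₀ hfV₀
  exact ⟨n, ⟨hn, hnV⟩, add_mem_nSet_of_mem_nSet_preimage (d := 1) ⟨hn, hnfV⟩⟩

end TopologicalSpace

theorem weaklyMixing_iff_two_consecutive_general {X : Type*} [TopologicalSpace X]
    (f : X → X) (hf : Continuous f) :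
    WeaklyMixing f ↔
      ∀ U V : Set X, IsOpen U → IsOpen V → U.Nonempty → V.Nonempty →
        ∃ n : ℕ, 1 ≤ n ∧ n ∈ NSet f U V ∧ n + 1 ∈ NSet f U V := by
  constructor
  · intro h U V hU hV hU₀ hV₀
    obtain ⟨n, hn, hn'⟩ := h.exists_mem_nSet_and_succ_mem_nSet hf hU hV hU₀ hV₀
    exact ⟨n, hn.1, hn, hn'⟩
  · intro h
    refine weaklyMixing_of_isThick_nSet hf fun U V ↦ isThick_nSet_of_two_consecutive hf ?_
    intro U V hU hV hU₀ hV₀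
    obtain ⟨n, -, hn⟩ := h U V hU hV hU₀ hV₀
    exact ⟨n, hn⟩

theorem weaklyMixing_iff_two_consecutive {X : Type*} [MetricSpace X] [Infinite X]
    [TopologicalSpace.SeparableSpace X] [LocallyCompactSpace X]
    (f : X → X) (hf : Continuous f) :
    WeaklyMixing f ↔
      ∀ U V : Set X, IsOpen U → IsOpen V → U.Nonempty → V.Nonempty →
        ∃ n : ℕ, 1 ≤ n ∧ n ∈ NSet f U V ∧ n + 1 ∈ NSet f U V :=
  weaklyMixing_iff_two_consecutive_general f hf
end
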